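/- Let k be a real number, set ζ = e^{ik}, and let z₁ and z₂ be nonzero complex numbers satisfying z₁ + z₁⁻¹ + z₂ + z₂⁻¹ = 4cos k. Let M be the 4×4 complex matrix with rows (1, 1, −1, −1), (z₁ − ζ, z₁ − ζ⁻¹, 0, 0), (0, 0, z₂⁻¹ − ζ, z₂⁻¹ − ζ⁻¹), and (1 − ζ z₁⁻¹, 0, 1 − ζ z₂, 0). Then the vector v = (z₁ − ζ⁻¹, −z₁ + ζ, z₂⁻¹ − ζ⁻¹, −z₂⁻¹ + ζ) satisfies M·v = 0. -/

import Mathlib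

open Complex Matrix

/-!
The mode is assembled edge by edge. On an edge whose far end carries the multiplier `w`, the wave
with coefficients `(w - ζ⁻¹, -w + ζ)` has the value `ζ - ζ⁻¹` at the origin, whatever `w` is, and
`w` times that value at the far end. Taking `w = z₁` on the horizontal edge and `w = z₂⁻¹` on the
vertical one, continuity is automatic and only the Kirchhoff condition is left. Each edge
contributes `w + w⁻¹ - (ζ + ζ⁻¹)` to it, and the sum of the two contributions vanishes exactly on
the dispersion relation.
-/

section VertexConditions

variable {K : Type*} [Field K]

/-- The matrix of vertex conditions of the square-lattice quantum graph, acting on the edge-wave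
coefficients `(a₁, b₁, a₂, b₂)`, with `ζ` in the role of `e^{ik}`. The vertical edge is oriented so
that its far end carries the multiplier `z₂⁻¹`. The last row is half the Kirchhoff condition
`(1 - ζ w⁻¹) a - (1 - ζ⁻¹ w⁻¹) b`, summed over the edges with `w = z₁` and `w = z₂⁻¹`, after `b` has
been eliminated by the matching condition `(w - ζ) a + (w - ζ⁻¹) b = 0`. -/
def vertexMatrix (ζ z₁ z₂ : K) : Matrix (Fin 4) (Fin 4) K :=
  !![1, 1, -1, -1;
     z₁ - ζ, z₁ - ζ⁻¹, 0, 0;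
     0, 0, z₂⁻¹ - ζ, z₂⁻¹ - ζ⁻¹;
     1 - ζ * z₁⁻¹, 0, 1 - ζ * z₂, 0]

/-- The coefficient vector `(a₁, b₁, a₂, b₂)` of the Floquet mode with multipliers `z₁` and `z₂`,
normalized to take the value `ζ - ζ⁻¹` at the vertex. -/
def floquetMode (ζ z₁ z₂ : K) : Fin 4 → K :=
  ![z₁ - ζ⁻¹, -z₁ + ζ, z₂⁻¹ - ζ⁻¹, -z₂⁻¹ + ζ]

theorem one_sub_mul_inv_mul_sub_inv {ζ w : K} (hζ : ζ ≠ 0) (hw : w ≠ 0) :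
    (1 - ζ * w⁻¹) * (w - ζ⁻¹) = w + w⁻¹ - (ζ + ζ⁻¹) := by
  field_simp
  ring

theorem vertexMatrix_mulVec_floquetMode {ζ z₁ z₂ : K} (hζ : ζ ≠ 0) (hz₁ : z₁ ≠ 0) (hz₂ : z₂ ≠ 0) :
    vertexMatrix ζ z₁ z₂ *ᵥ floquetMode ζ z₁ z₂ =
      ![0, 0, 0, z₁ + z₁⁻¹ + z₂ + z₂⁻¹ - 2 * (ζ + ζ⁻¹)] := by
  have origin_matching : (z₁ - ζ⁻¹) + (-z₁ + ζ) + -(z₂⁻¹ - ζ⁻¹) + -(-z₂⁻¹ + ζ) = 0 := by ring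
  have far_end_matching (w : K) : (w - ζ) * (w - ζ⁻¹) + (w - ζ⁻¹) * (-w + ζ) = 0 := by ring
  have kirchhoff :
      (1 - ζ * z₁⁻¹) * (z₁ - ζ⁻¹) + (1 - ζ * z₂) * (z₂⁻¹ - ζ⁻¹) =
        z₁ + z₁⁻¹ + z₂ + z₂⁻¹ - 2 * (ζ + ζ⁻¹) := by
    have horizontal := one_sub_mul_inv_mul_sub_inv hζ hz₁
    have vertical := one_sub_mul_inv_mul_sub_inv hζ (inv_ne_zero hz₂)
    rw [inv_inv] at vertical
    rw [horizontal, vertical]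
    ring
  ext i
  fin_cases i
  · simpa [vertexMatrix, floquetMode, mulVec, dotProduct, Fin.sum_univ_four]
      using origin_matching
  · simpa [vertexMatrix, floquetMode, mulVec, dotProduct, Fin.sum_univ_four]
      using far_end_matching z₁
  · simpa [vertexMatrix, floquetMode, mulVec, dotProduct, Fin.sum_univ_four]
      using far_end_matching z₂⁻¹
  · simpa [vertexMatrix, floquetMode, mulVec, dotProduct, Fin.sum_univ_four]
      using kirchhoff

theorem kernel_vector_of_dispersion_general {ζ z₁ z₂ : K}
    (hζ : ζ ≠ 0) (hz₁ : z₁ ≠ 0) (hz₂ : z₂ ≠ 0) :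
    vertexMatrix ζ z₁ z₂ *ᵥ floquetMode ζ z₁ z₂ = 0 ↔
      z₁ + z₁⁻¹ + z₂ + z₂⁻¹ = 2 * (ζ + ζ⁻¹) := by
  simp [vertexMatrix_mulVec_floquetMode hζ hz₁ hz₂, sub_eq_zero]

end VertexConditions

theorem exp_I_mul_add_inv (k : ℂ) :
    exp (I * k) + (exp (I * k))⁻¹ = 2 * cos k := by
  rw [two_cos, ← exp_neg, mul_comm I, neg_mul]

/-- when the dispersion relation holds, the explicit vector
`v = (z₁ − ζ⁻¹, −z₁ + ζ, z₂⁻¹ − ζ⁻¹, −z₂⁻¹ + ζ)` lies in the kernel of the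
matrix of vertex conditions. -/
theorem kernel_vector_of_dispersion
    (k : ℝ) (ζ : ℂ) (hζ : ζ = Complex.exp (Complex.I * k))
    (z₁ z₂ : ℂ) (hz₁ : z₁ ≠ 0) (hz₂ : z₂ ≠ 0)
    (hdisp : z₁ + z₁⁻¹ + z₂ + z₂⁻¹ = 4 * Real.cos k)
    (M : Matrix (Fin 4) (Fin 4) ℂ)
    (hM : M = !![1, 1, -1, -1;
                 z₁ - ζ, z₁ - ζ⁻¹, 0, 0;
                 0, 0, z₂⁻¹ - ζ, z₂⁻¹ - ζ⁻¹;
                 1 - ζ * z₁⁻¹, 0, 1 - ζ * z₂, 0])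
    (v : Fin 4 → ℂ)
    (hv : v = ![z₁ - ζ⁻¹, -z₁ + ζ, z₂⁻¹ - ζ⁻¹, -z₂⁻¹ + ζ]) :
    M.mulVec v = 0 := by
  subst hζ hM hv
  refine (kernel_vector_of_dispersion_general (exp_ne_zero _) hz₁ hz₂).2 (hdisp.trans ?_)
  rw [exp_I_mul_add_inv, ofReal_cos]
  ring
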